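/- Let a_n = √(2 log n), c_n = log(√(4π log n)), t_n(x) = x - c_n, and let f_n(x) = n a_n^{-1} φ(a_n + t_n(x)/a_n) Φ(a_n + t_n(x)/a_n)^{n-1} be the density of the normalized maximum Y_n = a_n(X_{(n)} - b_n), where b_n = a_n - c_n/a_n. Then there exist C > 0 and N ∈ ℕ such that for all n ≥ N and all x ∈ [-(1/4) log log n, (log n)^{1/4}], f_n(x) = exp(-x - e^{-x}) (1 + e^{-x}(t_n(x)² + 2 t_n(x) + 2)/(4 log n) - t_n(x)²/(4 log n)) (1 + r_n(x)) with |r_n(x)| ≤ C t_n(x)⁴/(log n)^{3/2} (interpreting t_n(x)⁴/(log n)^{3/2} ≥ (log n)^{-3/2}). -/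

import Mathlib

open MeasureTheory Filter Real

/-- The standard normal cumulative distribution function. -/
noncomputable def stdNormalCDF (x : ℝ) : ℝ :=
  ∫ t in Set.Iic x, Real.exp (-t ^ 2 / 2) / Real.sqrt (2 * Real.pi)

/-- The standard normal density. -/
noncomputable def stdNormalPDF (x : ℝ) : ℝ :=
  Real.exp (-x ^ 2 / 2) / Real.sqrt (2 * Real.pi)

/-- Scaling constant `a_n = √(2 log n)`. -/
noncomputable def aSeq (n : ℕ) : ℝ := Real.sqrt (2 * Real.log n)

/-- Centering constant
`b_n = √(2 log n) - (log log n + log (4π)) / (2 √(2 log n))`. -/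
noncomputable def bSeq (n : ℕ) : ℝ :=
  aSeq n - (Real.log (Real.log n) + Real.log (4 * Real.pi)) / (2 * aSeq n)

/-- `c_n = log (√(4 π log n))`. -/
noncomputable def cSeq (n : ℕ) : ℝ := Real.log (Real.sqrt (4 * Real.pi * Real.log n))

/-- The CDF of `Y_n = a_n (X_{(n)} - b_n)` where `X_{(n)}` is the maximum of `n`
i.i.d. standard normal random variables: `P(Y_n ≤ x) = Φ(b_n + x/a_n)^n`. -/
noncomputable def Fmax (n : ℕ) (x : ℝ) : ℝ := stdNormalCDF (bSeq n + x / aSeq n) ^ n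

/-- The density of `Y_n = a_n (X_{(n)} - b_n)`:
`f_n(x) = n a_n⁻¹ φ(b_n + x/a_n) Φ(b_n + x/a_n)^{n-1}`. -/
noncomputable def fmax (n : ℕ) (x : ℝ) : ℝ :=
  n * (aSeq n)⁻¹ * stdNormalPDF (bSeq n + x / aSeq n) *
    stdNormalCDF (bSeq n + x / aSeq n) ^ (n - 1)

/-- The density of the standard Gumbel distribution. -/
noncomputable def gumbelPDF (x : ℝ) : ℝ := Real.exp (-x - Real.exp (-x))

/-!
Write `t = t_n(x)`. Completing the square shows that `n a_n⁻¹ φ(a_n + t / a_n)` is exactly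
`e⁻ˣ exp(-t² / (4 log n))`. Dividing by the argument and inserting the Mills ratio gives
`n (1 - Φ) = e⁻ˣ (1 - (t² + 2 t + 2) / (4 log n) + ⋯)`, and `Φⁿ⁻¹` is `exp(-n (1 - Φ))` up to a
negligible factor. The logarithm of the density is therefore that of the Gumbel density plus a
first-order term `z = O(ε)` and an error `O(ε²)`, where `ε = (1 + e⁻ˣ) (1 + t²) / log n`; replacing
`exp z` by `1 + z` costs another `O(ε²)`. Letting `(n, x)` vary along the filter on which `ε → 0⁺`
makes all these estimates uniform in `x`. On the window of the theorem `e⁻ˣ ≤ (log n)^{1/4}`, so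
that `ε → 0` and `ε² = O((1 + t⁴) / (log n)^{3/2})`.
-/

section GaussianTail

open Set ProbabilityTheory Topology

lemma stdNormalPDF_eq_gaussianPDFReal : stdNormalPDF = gaussianPDFReal 0 1 := by
  ext x
  simp [stdNormalPDF, gaussianPDFReal_def, div_eq_inv_mul]

lemma stdNormalPDF_pos (x : ℝ) : 0 < stdNormalPDF x :=
  stdNormalPDF_eq_gaussianPDFReal ▸ gaussianPDFReal_pos 0 1 x one_ne_zero

lemma integrable_stdNormalPDF : Integrable stdNormalPDF :=
  stdNormalPDF_eq_gaussianPDFReal ▸ integrable_gaussianPDFReal 0 1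

lemma integral_stdNormalPDF : ∫ x, stdNormalPDF x = 1 :=
  stdNormalPDF_eq_gaussianPDFReal ▸ integral_gaussianPDFReal_eq_one 0 one_ne_zero

lemma one_sub_stdNormalCDF (u : ℝ) : 1 - stdNormalCDF u = ∫ x in Ioi u, stdNormalPDF x := by
  rw [sub_eq_iff_eq_add', ← integral_stdNormalPDF, ← compl_Iic]
  exact (integral_add_compl measurableSet_Iic integrable_stdNormalPDF).symm

lemma hasDerivAt_stdNormalPDF (x : ℝ) : HasDerivAt stdNormalPDF (-x * stdNormalPDF x) x := by
  have hexponent : HasDerivAt (fun y : ℝ => -y ^ 2 / 2) (-x) x :=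
    ((hasDerivAt_pow 2 x).neg.div_const 2).congr_deriv (by norm_num; ring)
  exact (hexponent.exp.div_const (√(2 * π))).congr_deriv (by rw [stdNormalPDF]; ring)

lemma tendsto_stdNormalPDF_atTop : Tendsto stdNormalPDF atTop (𝓝 0) := by
  have hexponent : Tendsto (fun x : ℝ => -x ^ 2 / 2) atTop atBot := by
    simp_rw [neg_div]
    exact tendsto_neg_atTop_atBot.comp
      ((tendsto_pow_atTop two_ne_zero).atTop_div_const two_pos)
  simpa only [zero_div] using! (tendsto_exp_atBot.comp hexponent).div_const (√(2 * π))

/-- The tail moment `∫_u^∞ φ(x) x⁻ᵏ dx`; integrating by parts relates the orders `k` and `k + 2`,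
which generates the asymptotic expansion of `1 - Φ`. -/
noncomputable def normalTailMoment (k : ℕ) (u : ℝ) : ℝ :=
  ∫ x in Ioi u, stdNormalPDF x * x⁻¹ ^ k

lemma normalTailMoment_zero (u : ℝ) : normalTailMoment 0 u = 1 - stdNormalCDF u := by
  simp only [normalTailMoment, pow_zero, mul_one, one_sub_stdNormalCDF]

lemma normalTailMoment_nonneg (k : ℕ) {u : ℝ} (hu : 0 < u) : 0 ≤ normalTailMoment k u :=
  setIntegral_nonneg measurableSet_Ioi fun x hx =>
    mul_nonneg (stdNormalPDF_pos x).le (pow_nonneg (inv_nonneg.2 (hu.trans hx).le) k)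

lemma integrableOn_stdNormalPDF_mul_inv_pow (k : ℕ) {u : ℝ} (hu : 0 < u) :
    IntegrableOn (fun x => stdNormalPDF x * x⁻¹ ^ k) (Ioi u) := by
  refine integrable_stdNormalPDF.integrableOn.mul_bdd (c := u⁻¹ ^ k)
    (by fun_prop) ((ae_restrict_mem measurableSet_Ioi).mono fun x hx => ?_)
  have hx0 : 0 < x := hu.trans hx
  rw [norm_of_nonneg (by positivity)]
  have hux : u ≤ x := le_of_lt hx
  gcongr

lemma normalTailMoment_eq (k : ℕ) {u : ℝ} (hu : 0 < u) :
    normalTailMoment k u =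
      stdNormalPDF u * u⁻¹ ^ (k + 1) - (k + 1) * normalTailMoment (k + 2) u := by
  have hderiv : ∀ x ∈ Ici u, HasDerivAt (fun y => -(stdNormalPDF y * y⁻¹ ^ (k + 1)))
      (stdNormalPDF x * x⁻¹ ^ k + (k + 1) * (stdNormalPDF x * x⁻¹ ^ (k + 2))) x := by
    intro x hx
    have hx0 : x ≠ 0 := (hu.trans_le hx).ne'
    refine ((hasDerivAt_stdNormalPDF x).mul ((hasDerivAt_inv hx0).pow (k + 1))).neg.congr_deriv ?_
    simp only [Pi.pow_apply, Nat.cast_add, Nat.cast_one, Nat.add_sub_cancel, ← inv_pow]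
    linear_combination stdNormalPDF x * x⁻¹ ^ k * mul_inv_cancel₀ hx0
  have hlim : Tendsto (fun y => -(stdNormalPDF y * y⁻¹ ^ (k + 1))) atTop (𝓝 0) := by
    simpa using (tendsto_stdNormalPDF_atTop.mul (tendsto_inv_atTop_zero.pow (k + 1))).neg
  have hk := integrableOn_stdNormalPDF_mul_inv_pow k hu
  have hk2 := (integrableOn_stdNormalPDF_mul_inv_pow (k + 2) hu).const_mul (k + 1 : ℝ)
  have hparts := integral_Ioi_of_hasDerivAt_of_tendsto' hderiv (hk.add hk2) hlim
  rw [integral_add hk hk2, integral_const_mul] at hparts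
  unfold normalTailMoment
  linarith

/-- The ratio `u (1 - Φ(u)) / φ(u)`, which tends to `1` as `u → ∞`. -/
noncomputable def normalizedMillsRatio (u : ℝ) : ℝ := u * (1 - stdNormalCDF u) / stdNormalPDF u

lemma abs_normalizedMillsRatio_sub_le {u : ℝ} (hu : 0 < u) :
    |normalizedMillsRatio u - (1 - u⁻¹ ^ 2)| ≤ 3 * u⁻¹ ^ 4 := by
  have hφ := stdNormalPDF_pos u
  have h0 : normalTailMoment 0 u = stdNormalPDF u * u⁻¹ - normalTailMoment 2 u := by
    simpa using normalTailMoment_eq 0 hu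
  have h2 : normalTailMoment 2 u = stdNormalPDF u * u⁻¹ ^ 3 - (2 + 1) * normalTailMoment 4 u :=
    normalTailMoment_eq 2 hu
  have h4 : normalTailMoment 4 u = stdNormalPDF u * u⁻¹ ^ 5 - (4 + 1) * normalTailMoment 6 u :=
    normalTailMoment_eq 4 hu
  have hM4 := normalTailMoment_nonneg 4 hu
  have hM4_le : normalTailMoment 4 u ≤ stdNormalPDF u * u⁻¹ ^ 5 := by
    linarith [normalTailMoment_nonneg 6 hu]
  have hremainder : normalizedMillsRatio u - (1 - u⁻¹ ^ 2) =
      3 * u * normalTailMoment 4 u / stdNormalPDF u := by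
    rw [normalizedMillsRatio, ← normalTailMoment_zero, h0, h2]
    field_simp
    ring
  rw [hremainder, abs_of_nonneg (by positivity), div_le_iff₀ hφ]
  calc 3 * u * normalTailMoment 4 u ≤ 3 * u * (stdNormalPDF u * u⁻¹ ^ 5) := by gcongr
    _ = 3 * u⁻¹ ^ 4 * stdNormalPDF u := by field_simp

end GaussianTail

section Expansions

open Asymptotics Topology

lemma exp_sub_one_add_isBigO_sq : (fun z => exp z - (1 + z)) =O[𝓝 0] fun z => z ^ 2 := by
  simpa [Finset.sum_range_succ] using Real.exp_sub_sum_range_isBigO_pow 2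

lemma inv_one_add_sub_isBigO_sq :
    (fun w : ℝ => (1 + w)⁻¹ - (1 - w)) =O[𝓝 0] fun w => w ^ 2 := by
  have hlim : Tendsto (fun w : ℝ => 1 + w) (𝓝 0) (𝓝 1) :=
    Continuous.tendsto' (by fun_prop) 0 1 (by simp)
  have hinv : (fun w : ℝ => (1 + w)⁻¹) =O[𝓝 0] fun _ => (1 : ℝ) :=
    (hlim.inv₀ one_ne_zero).isBigO_one ℝ
  refine ((isBigO_refl (fun w : ℝ => w ^ 2) (𝓝 0)).mul hinv).congr' ?_ (by simp)
  filter_upwards [hlim.eventually_ne one_ne_zero] with w hw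
  field_simp
  ring

lemma log_one_sub_add_isBigO_sq : (fun p => log (1 - p) + p) =O[𝓝 0] fun p => p ^ 2 := by
  refine IsBigO.of_bound 2 ?_
  filter_upwards [Metric.ball_mem_nhds 0 (by norm_num : (0 : ℝ) < 1 / 2)] with p hp
  have hp' : |p| < 1 / 2 := by simpa using hp
  have htaylor := abs_log_sub_add_sum_range_le (hp'.trans (by norm_num)) 1
  norm_num only [Finset.sum_range_one, Nat.cast_zero, zero_add, pow_one, div_one] at htaylor
  rw [add_comm, norm_eq_abs, norm_pow, norm_eq_abs]
  refine htaylor.trans ?_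
  rw [div_le_iff₀ (by linarith)]
  nlinarith only [mul_nonneg (sq_nonneg |p|) (sub_nonneg.2 hp'.le)]

variable {α : Type*} {l : Filter α}

lemma exp_isBigO_one_add_exp (f : α → ℝ) :
    (fun i => exp (f i)) =O[l] fun i => 1 + exp (f i) :=
  IsBigO.of_norm_le fun i => by rw [norm_of_nonneg (exp_pos _).le]; linarith

lemma mul_sub_one_add_isBigO_sq {P Q a b ε : α → ℝ} (hε : ε =O[l] fun _ => (1 : ℝ))
    (ha : a =O[l] ε) (hb : b =O[l] ε) (hP : (fun i => P i - (1 + a i)) =O[l] fun i => ε i ^ 2)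
    (hQ : (fun i => Q i - (1 + b i)) =O[l] fun i => ε i ^ 2) :
    (fun i => P i * Q i - (1 + (a i + b i))) =O[l] fun i => ε i ^ 2 := by
  have hone : (fun _ => (1 : ℝ)) =O[l] fun _ => (1 : ℝ) := isBigO_refl _ _
  have hQ1 : Q =O[l] fun _ => (1 : ℝ) := by
    simpa using (hQ.trans (by simpa using hε.pow 2)).add (hone.add (hb.trans hε))
  have hPQ := hP.mul hQ1
  have haQ := (hone.add (ha.trans hε)).mul hQ
  have hab := ha.mul hb
  simp only [mul_one, one_mul, ← sq] at hPQ haQ hab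
  exact ((hPQ.add haQ).add hab).congr_left fun i => by ring

lemma exp_add_div_one_add_sub_one_isBigO_sq {z g ε : α → ℝ} (hε : Tendsto ε l (𝓝 0))
    (hz : z =O[l] ε) (hg : g =O[l] fun i => ε i ^ 2) :
    (fun i => exp (z i + g i) / (1 + z i) - 1) =O[l] fun i => ε i ^ 2 := by
  have hz0 : Tendsto (fun i => 1 + z i) l (𝓝 1) := by
    simpa using (hz.trans_tendsto hε).const_add 1
  have hzg : (fun i => z i + g i) =O[l] ε :=
    hz.add (hg.trans (by simpa [sq] using (isBigO_refl ε l).mul (hε.isBigO_one ℝ)))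
  have hexp : (fun i => exp (z i + g i) - (1 + (z i + g i))) =O[l] fun i => ε i ^ 2 :=
    (exp_sub_one_add_isBigO_sq.comp_tendsto (hzg.trans_tendsto hε)).trans (hzg.pow 2)
  refine ((hexp.add hg).mul ((hz0.inv₀ one_ne_zero).isBigO_one ℝ)).congr' ?_ (by simp)
  filter_upwards [hz0.eventually_ne one_ne_zero] with i hi
  field_simp
  ring

end Expansions

section GumbelRegime

open Asymptotics Topology

/-- The centred variable `t_n(x) = x - c_n` at the point `p = (n, x)`. -/
noncomputable def gumbelShift (p : ℕ × ℝ) : ℝ := p.2 - cSeq p.1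

/-- The point `a_n + t_n(x) / a_n` at which the normal density and distribution function are
evaluated. -/
noncomputable def normalArg (p : ℕ × ℝ) : ℝ := aSeq p.1 + gumbelShift p / aSeq p.1

/-- The relative distance `w` of `normalArg` from `a_n`, so that the former is `a_n (1 + w)`. -/
noncomputable def relShift (p : ℕ × ℝ) : ℝ := gumbelShift p / (2 * log p.1)

/-- The quadratic term of the exponent of `φ` at `normalArg`. -/
noncomputable def densityCorrection (p : ℕ × ℝ) : ℝ := gumbelShift p ^ 2 / (4 * log p.1)

/-- The first-order term in `n (1 - Φ) ≈ e⁻ˣ (1 - tailCorrection)`: the sum of the corrections from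
the exponent of `φ`, from `1 / normalArg`, and from the Mills ratio. -/
noncomputable def tailCorrection (p : ℕ × ℝ) : ℝ :=
  (gumbelShift p ^ 2 + 2 * gumbelShift p + 2) / (4 * log p.1)

/-- The common size of the first-order corrections to `φ` and to `e^x n (1 - Φ)`. -/
noncomputable def correctionScale (p : ℕ × ℝ) : ℝ := (1 + gumbelShift p ^ 2) / log p.1

/-- The size of the first-order correction to the density of the maximum. The factor `e⁻ˣ` appears
because the tail `n (1 - Φ) ≈ e⁻ˣ` enters the density through its exponential. -/
noncomputable def expansionScale (p : ℕ × ℝ) : ℝ := (1 + exp (-p.2)) * correctionScale p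

/-- The filter of points `(n, x)` along which the first-order correction is positive and vanishes;
positivity excludes `n ≤ 1`, where `log n = 0`. -/
noncomputable def gumbelRegime : Filter (ℕ × ℝ) := comap expansionScale (𝓝[>] 0)

lemma aSeq_sq (n : ℕ) : aSeq n ^ 2 = 2 * log n :=
  sq_sqrt (mul_nonneg two_pos.le (log_natCast_nonneg n))

lemma aSeq_pos {n : ℕ} (hn : 0 < log n) : 0 < aSeq n := sqrt_pos.2 (by positivity)

lemma exp_cSeq {n : ℕ} (hn : 0 < log n) : exp (cSeq n) = aSeq n * √(2 * π) := by
  rw [cSeq, aSeq, exp_log (by positivity), ← sqrt_mul (by positivity)]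
  congr 1
  ring

lemma normalArg_eq {p : ℕ × ℝ} (hp : 0 < log p.1) :
    normalArg p = aSeq p.1 * (1 + relShift p) := by
  have ha := aSeq_pos hp
  rw [normalArg, relShift, ← aSeq_sq]
  field_simp

lemma mul_stdNormalPDF_normalArg {p : ℕ × ℝ} (hp : 0 < log p.1) :
    p.1 * (aSeq p.1)⁻¹ * stdNormalPDF (normalArg p) =
      exp (-p.2) * exp (-densityCorrection p) := by
  have ha := aSeq_pos hp
  have hn : (0 : ℝ) < p.1 := Nat.cast_pos.2 (Nat.pos_of_ne_zero fun h => by simp [h] at hp)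
  have hexponent : -normalArg p ^ 2 / 2 = -log p.1 + (-p.2 + cSeq p.1) - densityCorrection p := by
    have hlog : log p.1 = aSeq p.1 ^ 2 / 2 := by rw [aSeq_sq]; ring
    rw [normalArg, densityCorrection, hlog, gumbelShift]
    field_simp
    ring
  rw [stdNormalPDF, hexponent, sub_eq_add_neg, exp_add, exp_add, exp_add, exp_neg (log _),
    exp_log hn, exp_cSeq hp]
  field_simp

lemma mul_one_sub_stdNormalCDF_normalArg {p : ℕ × ℝ} (hp : 0 < log p.1) (hu : normalArg p ≠ 0) :
    p.1 * (1 - stdNormalCDF (normalArg p)) =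
      exp (-p.2) * (exp (-densityCorrection p) * (1 + relShift p)⁻¹ *
        normalizedMillsRatio (normalArg p)) := by
  have ha := (aSeq_pos hp).ne'
  have hφ := (stdNormalPDF_pos (normalArg p)).ne'
  rw [← mul_assoc, ← mul_assoc, ← mul_stdNormalPDF_normalArg hp, normalizedMillsRatio]
  have hw : 1 + relShift p ≠ 0 := right_ne_zero_of_mul (normalArg_eq hp ▸ hu)
  field_simp
  rw [normalArg_eq hp, mul_assoc]

lemma tendsto_expansionScale : Tendsto expansionScale gumbelRegime (𝓝 0) :=
  tendsto_comap.mono_right nhdsWithin_le_nhds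

lemma eventually_log_pos : ∀ᶠ p in gumbelRegime, 0 < log p.1 := by
  filter_upwards [tendsto_comap.eventually self_mem_nhdsWithin] with p hp
  refine (log_natCast_nonneg p.1).lt_of_ne' fun h => ?_
  simp [expansionScale, correctionScale, h] at hp

lemma correctionScale_isBigO_expansionScale :
    correctionScale =O[gumbelRegime] expansionScale := by
  refine IsBigO.of_bound' (.of_forall fun p => ?_)
  rw [expansionScale, norm_mul]
  refine le_mul_of_one_le_left (norm_nonneg _) ?_
  rw [norm_of_nonneg (by positivity)]
  linarith [exp_pos (-p.2)]

lemma tendsto_correctionScale : Tendsto correctionScale gumbelRegime (𝓝 0) :=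
  correctionScale_isBigO_expansionScale.trans_tendsto tendsto_expansionScale

lemma div_log_isBigO_correctionScale {f : ℕ × ℝ → ℝ} {C : ℝ}
    (hf : ∀ p, |f p| ≤ C * (1 + gumbelShift p ^ 2)) :
    (fun p => f p / log p.1) =O[gumbelRegime] correctionScale := by
  refine IsBigO.of_bound C (.of_forall fun p => ?_)
  have hlog := log_natCast_nonneg p.1
  have hshift : 0 ≤ 1 + gumbelShift p ^ 2 := by positivity
  rw [correctionScale, norm_eq_abs, norm_eq_abs, abs_div, abs_div, abs_of_nonneg hlog,
    abs_of_nonneg hshift, ← mul_div_assoc]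
  exact div_le_div_of_nonneg_right (hf p) hlog

lemma inv_log_isBigO_correctionScale :
    (fun p => (log p.1)⁻¹) =O[gumbelRegime] correctionScale := by
  simpa using div_log_isBigO_correctionScale (f := fun _ => 1) (C := 1)
    fun p => by rw [abs_one]; linarith [sq_nonneg (gumbelShift p)]

lemma inv_log_div_two_isBigO_correctionScale :
    (fun p => (log p.1)⁻¹ / 2) =O[gumbelRegime] correctionScale := by
  simpa only [div_eq_inv_mul] using! inv_log_isBigO_correctionScale.const_mul_left 2⁻¹

lemma relShift_isBigO_correctionScale : relShift =O[gumbelRegime] correctionScale := by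
  refine (div_log_isBigO_correctionScale (f := fun p => gumbelShift p / 2) (C := 1)
    fun p => abs_le.2 ⟨?_, ?_⟩).congr_left fun p => by rw [relShift, div_div]
  all_goals nlinarith [sq_nonneg (gumbelShift p - 1), sq_nonneg (gumbelShift p + 1)]

lemma densityCorrection_isBigO_correctionScale :
    densityCorrection =O[gumbelRegime] correctionScale := by
  refine (div_log_isBigO_correctionScale (f := fun p => gumbelShift p ^ 2 / 4) (C := 1)
    fun p => ?_).congr_left fun p => by rw [densityCorrection, div_div]
  rw [abs_of_nonneg (by positivity)]
  linarith [sq_nonneg (gumbelShift p)]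

lemma tailCorrection_eq (p : ℕ × ℝ) :
    tailCorrection p = densityCorrection p + relShift p + (log p.1)⁻¹ / 2 := by
  unfold tailCorrection densityCorrection relShift
  ring

lemma tailCorrection_isBigO_correctionScale : tailCorrection =O[gumbelRegime] correctionScale :=
  ((densityCorrection_isBigO_correctionScale.add relShift_isBigO_correctionScale).add
    inv_log_div_two_isBigO_correctionScale).congr_left fun p => (tailCorrection_eq p).symm

lemma tendsto_log_fst_atTop : Tendsto (fun p => log p.1) gumbelRegime atTop := by
  have hinv := inv_log_isBigO_correctionScale.trans_tendsto tendsto_correctionScale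
  refine (tendsto_inv_nhdsGT_zero.comp (tendsto_nhdsWithin_iff.2 ⟨hinv, ?_⟩)).congr
    fun p => inv_inv _
  exact eventually_log_pos.mono fun p hp => inv_pos.2 hp

lemma tendsto_fst_atTop : Tendsto (fun p => (p.1 : ℝ)) gumbelRegime atTop :=
  tendsto_atTop_mono (fun p => log_le_self p.1.cast_nonneg) tendsto_log_fst_atTop

lemma tendsto_one_add_relShift : Tendsto (fun p => 1 + relShift p) gumbelRegime (𝓝 1) := by
  simpa using
    (relShift_isBigO_correctionScale.trans_tendsto tendsto_correctionScale).const_add 1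

lemma eventually_normalArg_pos : ∀ᶠ p in gumbelRegime, 0 < normalArg p := by
  filter_upwards [eventually_log_pos, tendsto_one_add_relShift.eventually_const_lt one_pos]
    with p hp hw
  rw [normalArg_eq hp]
  exact mul_pos (aSeq_pos hp) hw

lemma inv_one_add_relShift_sub_isBigO :
    (fun p => (1 + relShift p)⁻¹ - (1 + -relShift p)) =O[gumbelRegime]
      fun p => correctionScale p ^ 2 :=
  (inv_one_add_sub_isBigO_sq.comp_tendsto
    (relShift_isBigO_correctionScale.trans_tendsto tendsto_correctionScale)).trans
      (relShift_isBigO_correctionScale.pow 2)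

lemma exp_neg_densityCorrection_sub_isBigO :
    (fun p => exp (-densityCorrection p) - (1 + -densityCorrection p)) =O[gumbelRegime]
      fun p => correctionScale p ^ 2 :=
  have h := densityCorrection_isBigO_correctionScale.neg_left
  (exp_sub_one_add_isBigO_sq.comp_tendsto (h.trans_tendsto tendsto_correctionScale)).trans
    (h.pow 2)

lemma inv_normalArg_sq {p : ℕ × ℝ} (hp : 0 < log p.1) :
    (normalArg p)⁻¹ ^ 2 = (log p.1)⁻¹ / 2 * (1 + relShift p)⁻¹ ^ 2 := by
  rw [normalArg_eq hp, inv_pow, mul_pow, aSeq_sq, mul_inv, mul_inv, inv_pow]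
  ring

lemma tendsto_inv_one_add_relShift :
    Tendsto (fun p => (1 + relShift p)⁻¹) gumbelRegime (𝓝 1) := by
  simpa using tendsto_one_add_relShift.inv₀ one_ne_zero

lemma inv_one_add_relShift_sub_one_isBigO :
    (fun p => (1 + relShift p)⁻¹ - 1) =O[gumbelRegime] correctionScale := by
  have hsq : (fun p => correctionScale p ^ 2) =O[gumbelRegime] correctionScale := by
    simpa [sq] using (isBigO_refl correctionScale gumbelRegime).mul
      (tendsto_correctionScale.isBigO_one ℝ)
  exact ((inv_one_add_relShift_sub_isBigO.trans hsq).sub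
    relShift_isBigO_correctionScale).congr_left fun p => by ring

lemma inv_normalArg_sq_isBigO :
    (fun p => (normalArg p)⁻¹ ^ 2) =O[gumbelRegime] correctionScale := by
  have h := inv_log_div_two_isBigO_correctionScale.mul
    ((tendsto_inv_one_add_relShift.pow 2).isBigO_one ℝ)
  exact h.congr' (eventually_log_pos.mono fun p hp => (inv_normalArg_sq hp).symm) (by simp)

lemma inv_normalArg_sq_sub_isBigO :
    (fun p => (normalArg p)⁻¹ ^ 2 - (log p.1)⁻¹ / 2) =O[gumbelRegime]
      fun p => correctionScale p ^ 2 := by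
  have h := (inv_log_div_two_isBigO_correctionScale.mul inv_one_add_relShift_sub_one_isBigO).mul
    ((tendsto_inv_one_add_relShift.add_const 1).isBigO_one ℝ)
  refine h.congr' (eventually_log_pos.mono fun p hp => ?_) (.of_forall fun p => by ring)
  simp only [inv_normalArg_sq hp]
  ring

lemma normalizedMillsRatio_normalArg_sub_isBigO :
    (fun p => normalizedMillsRatio (normalArg p) - (1 + -((log p.1)⁻¹ / 2))) =O[gumbelRegime]
      fun p => correctionScale p ^ 2 := by
  have hmills : (fun p => normalizedMillsRatio (normalArg p) - (1 - (normalArg p)⁻¹ ^ 2))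
      =O[gumbelRegime] fun p => ((normalArg p)⁻¹ ^ 2) ^ 2 := by
    refine IsBigO.of_bound 3 (eventually_normalArg_pos.mono fun p hu => ?_)
    rw [← pow_mul, norm_eq_abs, norm_of_nonneg (by positivity : 0 ≤ (normalArg p)⁻¹ ^ (2 * 2))]
    exact abs_normalizedMillsRatio_sub_le hu
  exact ((hmills.trans (inv_normalArg_sq_isBigO.pow 2)).sub
    inv_normalArg_sq_sub_isBigO).congr_left fun p => by ring

lemma mul_one_sub_stdNormalCDF_sub_isBigO :
    (fun p => p.1 * (1 - stdNormalCDF (normalArg p)) - exp (-p.2) * (1 - tailCorrection p))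
      =O[gumbelRegime] fun p => expansionScale p ^ 2 := by
  have hB := densityCorrection_isBigO_correctionScale.neg_left
  have hw := relShift_isBigO_correctionScale.neg_left
  have hv := inv_log_div_two_isBigO_correctionScale.neg_left
  have hscale := tendsto_correctionScale.isBigO_one ℝ
  have hproduct := mul_sub_one_add_isBigO_sq hscale (hB.add hw) hv
    (mul_sub_one_add_isBigO_sq hscale hB hw exp_neg_densityCorrection_sub_isBigO
      inv_one_add_relShift_sub_isBigO)
    normalizedMillsRatio_normalArg_sub_isBigO
  have hexp : (fun p => exp (-p.2) * correctionScale p ^ 2) =O[gumbelRegime]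
      fun p => expansionScale p ^ 2 := by
    refine IsBigO.of_norm_le fun p => ?_
    rw [norm_of_nonneg (by positivity), expansionScale, mul_pow]
    gcongr
    nlinarith only [exp_pos (-p.2)]
  refine (((isBigO_refl (fun p => exp (-p.2)) gumbelRegime).mul hproduct).trans hexp).congr' ?_
    .rfl
  filter_upwards [eventually_log_pos, eventually_normalArg_pos] with p hp hu
  rw [mul_one_sub_stdNormalCDF_normalArg hp hu.ne', tailCorrection_eq]
  ring

lemma one_add_exp_sq_div_isBigO :
    (fun p => (1 + exp (-p.2)) ^ 2 / p.1) =O[gumbelRegime] fun p => expansionScale p ^ 2 := by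
  have hinv : (fun p : ℕ × ℝ => (p.1 : ℝ)⁻¹) =O[gumbelRegime] fun p => (log p.1)⁻¹ ^ 2 := by
    have hpow := (isLittleO_pow_log_id_atTop (n := 2)).isBigO.comp_tendsto
      tendsto_fst_atTop
    refine (hpow.inv_rev ?_).congr_right fun p => (inv_pow _ 2).symm
    filter_upwards [eventually_log_pos] with p hp h0
    exact absurd h0 (by simp [hp.ne'])
  have hscale := hinv.trans (inv_log_isBigO_correctionScale.pow 2)
  refine ((isBigO_refl (fun p : ℕ × ℝ => (1 + exp (-p.2)) ^ 2) gumbelRegime).mul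
    hscale).congr_right fun p => by rw [expansionScale, mul_pow]

lemma mul_one_sub_stdNormalCDF_isBigO :
    (fun p => p.1 * (1 - stdNormalCDF (normalArg p))) =O[gumbelRegime]
      fun p => 1 + exp (-p.2) := by
  have hone : (fun _ => (1 : ℝ)) =O[gumbelRegime] fun p => 1 + exp (-p.2) :=
    IsBigO.of_norm_le fun p => by rw [norm_one]; linarith [exp_pos (-p.2)]
  have herror := (mul_one_sub_stdNormalCDF_sub_isBigO.trans
    ((tendsto_expansionScale.pow 2).isBigO_one ℝ)).trans hone
  have hmain := (exp_isBigO_one_add_exp fun p : ℕ × ℝ => -p.2).mul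
    (((tailCorrection_isBigO_correctionScale.trans_tendsto tendsto_correctionScale).const_sub
      1).isBigO_one ℝ)
  simpa using herror.add (hmain.congr_right fun p => mul_one _)

lemma one_sub_stdNormalCDF_isBigO :
    (fun p => 1 - stdNormalCDF (normalArg p)) =O[gumbelRegime]
      fun p => (1 + exp (-p.2)) / p.1 := by
  refine (mul_one_sub_stdNormalCDF_isBigO.mul
    (isBigO_refl (fun p => (p.1 : ℝ)⁻¹) gumbelRegime)).congr' ?_ .rfl
  filter_upwards [tendsto_fst_atTop.eventually_ne_atTop 0] with p hp
  field_simp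

lemma one_sub_stdNormalCDF_isBigO_expansionScale_sq :
    (fun p => 1 - stdNormalCDF (normalArg p)) =O[gumbelRegime]
      fun p => expansionScale p ^ 2 := by
  refine (one_sub_stdNormalCDF_isBigO.trans (IsBigO.of_norm_le fun p => ?_)).trans
    one_add_exp_sq_div_isBigO
  rw [norm_of_nonneg (by positivity)]
  gcongr
  exact le_self_pow₀ (by linarith [exp_pos (-p.2)]) two_ne_zero

lemma tendsto_one_sub_stdNormalCDF :
    Tendsto (fun p => 1 - stdNormalCDF (normalArg p)) gumbelRegime (𝓝 0) :=
  one_sub_stdNormalCDF_isBigO_expansionScale_sq.trans_tendsto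
    (by simpa using tendsto_expansionScale.pow 2)

lemma mul_log_stdNormalCDF_add_isBigO :
    (fun p => (p.1 - 1) * log (stdNormalCDF (normalArg p)) +
        p.1 * (1 - stdNormalCDF (normalArg p))) =O[gumbelRegime]
      fun p => expansionScale p ^ 2 := by
  set τ : ℕ × ℝ → ℝ := fun p => 1 - stdNormalCDF (normalArg p)
  have hτ0 : Tendsto τ gumbelRegime (𝓝 0) := tendsto_one_sub_stdNormalCDF
  have hlog : (fun p => log (1 - τ p) + τ p) =O[gumbelRegime] fun p => τ p ^ 2 :=
    log_one_sub_add_isBigO_sq.comp_tendsto hτ0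
  have hnlog : (fun p => p.1 * (log (1 - τ p) + τ p)) =O[gumbelRegime]
      fun p => expansionScale p ^ 2 := by
    have hnτ := mul_one_sub_stdNormalCDF_isBigO.mul one_sub_stdNormalCDF_isBigO
    refine (((isBigO_refl (fun p => (p.1 : ℝ)) gumbelRegime).mul hlog).trans ?_).trans
      one_add_exp_sq_div_isBigO
    exact hnτ.congr (fun p => by ring) (fun p => by ring)
  have hτ : τ =O[gumbelRegime] fun p => expansionScale p ^ 2 :=
    one_sub_stdNormalCDF_isBigO_expansionScale_sq
  have hlogτ : (fun p => log (1 - τ p) + τ p) =O[gumbelRegime] fun p => expansionScale p ^ 2 :=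
    hlog.trans ((by simpa [sq] using (isBigO_refl τ gumbelRegime).mul (hτ0.isBigO_one ℝ) :
      (fun p => τ p ^ 2) =O[gumbelRegime] τ).trans hτ)
  exact ((hnlog.sub hlogτ).add hτ).congr_left fun p => by
    simp only [τ, sub_sub_cancel]
    ring

/-- The first-order correction in the expansion of the density of the normalized maximum about the
Gumbel density. -/
noncomputable def firstOrderTerm (p : ℕ × ℝ) : ℝ :=
  exp (-p.2) * tailCorrection p - densityCorrection p

lemma firstOrderTerm_isBigO : firstOrderTerm =O[gumbelRegime] expansionScale :=
  ((exp_isBigO_one_add_exp _).mul tailCorrection_isBigO_correctionScale).sub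
    (densityCorrection_isBigO_correctionScale.trans correctionScale_isBigO_expansionScale)

lemma exists_isBigO_density_eq_exp :
    ∃ g : ℕ × ℝ → ℝ, g =O[gumbelRegime] (fun p => expansionScale p ^ 2) ∧
      ∀ᶠ p in gumbelRegime,
        p.1 * (aSeq p.1)⁻¹ * stdNormalPDF (normalArg p) * stdNormalCDF (normalArg p) ^ (p.1 - 1) =
          exp (-p.2 - exp (-p.2)) * exp (firstOrderTerm p + g p) := by
  refine ⟨_, mul_log_stdNormalCDF_add_isBigO.sub mul_one_sub_stdNormalCDF_sub_isBigO, ?_⟩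
  filter_upwards [eventually_log_pos, tendsto_one_sub_stdNormalCDF.eventually_lt_const one_pos,
    tendsto_fst_atTop.eventually_ge_atTop 1] with p hp hΦ hn
  have hΦ0 : 0 < stdNormalCDF (normalArg p) := by linarith
  rw [mul_stdNormalPDF_normalArg hp, ← exp_log (pow_pos hΦ0 _), log_pow,
    Nat.cast_pred (by exact_mod_cast hn), ← exp_add, ← exp_add, ← exp_add, firstOrderTerm]
  congr 1
  ring

lemma exists_isBigO_density_eq_mul :
    ∃ r : ℕ × ℝ → ℝ, r =O[gumbelRegime] (fun p => expansionScale p ^ 2) ∧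
      ∀ᶠ p in gumbelRegime,
        p.1 * (aSeq p.1)⁻¹ * stdNormalPDF (normalArg p) * stdNormalCDF (normalArg p) ^ (p.1 - 1) =
          exp (-p.2 - exp (-p.2)) * (1 + firstOrderTerm p) * (1 + r p) := by
  obtain ⟨g, hg, hdensity⟩ := exists_isBigO_density_eq_exp
  refine ⟨_, exp_add_div_one_add_sub_one_isBigO_sq tendsto_expansionScale
    firstOrderTerm_isBigO hg, ?_⟩
  have hlim : Tendsto (fun p => 1 + firstOrderTerm p) gumbelRegime (𝓝 1) := by
    simpa using (firstOrderTerm_isBigO.trans_tendsto tendsto_expansionScale).const_add 1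
  filter_upwards [hdensity, hlim.eventually_ne one_ne_zero] with p hp hz
  rw [hp]
  field_simp
  ring

end GumbelRegime

theorem density_asymptotic_general :
    ∃ C > (0 : ℝ), ∃ ε > (0 : ℝ), ∀ (n : ℕ) (x : ℝ),
      (1 + exp (-x)) * (1 + (x - cSeq n) ^ 2) ≤ ε * log n →
        ∃ r : ℝ,
          (n : ℝ) * (aSeq n)⁻¹ * stdNormalPDF (aSeq n + (x - cSeq n) / aSeq n) *
              stdNormalCDF (aSeq n + (x - cSeq n) / aSeq n) ^ (n - 1) =
            exp (-x - exp (-x)) *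
              (1 + exp (-x) * ((x - cSeq n) ^ 2 + 2 * (x - cSeq n) + 2) / (4 * log n)
                - (x - cSeq n) ^ 2 / (4 * log n)) * (1 + r) ∧
          |r| ≤ C * ((1 + exp (-x)) * (1 + (x - cSeq n) ^ 2) / log n) ^ 2 := by
  obtain ⟨r, hr, hdensity⟩ := exists_isBigO_density_eq_mul
  obtain ⟨C, hC, hbound⟩ := hr.exists_pos
  obtain ⟨δ, hδ, hsmall⟩ :=
    ((nhdsGT_basis (0 : ℝ)).comap expansionScale).eventually_iff.1 (hdensity.and hbound.bound)
  refine ⟨C, hC, δ / 2, half_pos hδ, fun n x hx => ⟨r (n, x), ?_⟩⟩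
  have hlog : 0 < log n := pos_of_mul_pos_right (lt_of_lt_of_le (by positivity) hx) (half_pos hδ).le
  have hscale : expansionScale (n, x) = (1 + exp (-x)) * (1 + (x - cSeq n) ^ 2) / log n := by
    rw [expansionScale, correctionScale, gumbelShift, mul_div_assoc]
  have hregime : expansionScale (n, x) ∈ Set.Ioo 0 δ := by
    rw [hscale]
    exact ⟨by positivity, ((div_le_iff₀ hlog).2 hx).trans_lt (half_lt_self hδ)⟩
  obtain ⟨heq, hle⟩ := hsmall hregime
  refine ⟨heq.trans ?_, ?_⟩
  · simp only [firstOrderTerm, tailCorrection, densityCorrection, gumbelShift]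
    ring
  · simpa only [norm_eq_abs, abs_sq, hscale] using! hle

section Window

lemma abs_cSeq_le {n : ℕ} (hn : 1 ≤ log n) : |cSeq n| ≤ 4 * log n ^ ((1 : ℝ) / 4) := by
  have hroot : 1 ≤ √(4 * π * log n) :=
    one_le_sqrt.2 (one_le_mul_of_one_le_of_one_le (by linarith [pi_gt_three]) hn)
  rw [cSeq, abs_of_nonneg (log_nonneg hroot)]
  calc log √(4 * π * log n)
      ≤ √(4 * π * log n) ^ ((1 : ℝ) / 2) / (1 / 2) := log_le_rpow_div (by positivity) (by norm_num)
    _ = 2 * (4 * π * log n) ^ ((1 : ℝ) / 4) := by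
      rw [sqrt_eq_rpow, ← rpow_mul (by positivity)]
      norm_num
      ring
    _ ≤ 2 * (2 ^ (4 : ℝ) * log n) ^ ((1 : ℝ) / 4) := by
      gcongr
      norm_num
      linarith [pi_le_four]
    _ = 4 * log n ^ ((1 : ℝ) / 4) := by
      rw [mul_rpow (by positivity) (by positivity), ← rpow_mul two_pos.le]
      norm_num
      ring

lemma one_add_exp_neg_le {L x : ℝ} (hL : 1 ≤ L) (hx : -(1 / 4) * log L ≤ x) :
    1 + exp (-x) ≤ 2 * L ^ ((1 : ℝ) / 4) := by
  have hexp : exp (-x) ≤ L ^ ((1 : ℝ) / 4) := by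
    rw [rpow_def_of_pos (by positivity)]
    exact exp_le_exp.2 (by linarith)
  linarith [one_le_rpow hL (by norm_num : (0 : ℝ) ≤ 1 / 4)]

lemma one_add_sub_cSeq_sq_le {n : ℕ} {x : ℝ} (hn : 1 ≤ log n)
    (hx : x ∈ Set.Icc (-(1 / 4) * log (log n)) (log n ^ ((1 : ℝ) / 4))) :
    1 + (x - cSeq n) ^ 2 ≤ 26 * (log n ^ ((1 : ℝ) / 4)) ^ 2 := by
  have hq := one_le_rpow hn (by norm_num : (0 : ℝ) ≤ 1 / 4)
  have hloglog := log_le_rpow_div (zero_le_one.trans hn) (by norm_num : (0 : ℝ) < 1 / 4)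
  have hx' : |x| ≤ log n ^ ((1 : ℝ) / 4) := abs_le.2 ⟨by linarith [hx.1], hx.2⟩
  have hshift : |x - cSeq n| ≤ 5 * log n ^ ((1 : ℝ) / 4) := by
    linarith [abs_sub x (cSeq n), abs_cSeq_le hn]
  have hsq := sq_le_sq' (abs_le.1 hshift).1 (abs_le.1 hshift).2
  nlinarith

lemma one_add_exp_neg_mul_le {ε : ℝ} (hε : 0 < ε) {n : ℕ} {x : ℝ} (hn : 1 ≤ log n)
    (hq : 52 / ε ≤ log n ^ ((1 : ℝ) / 4))
    (hx : x ∈ Set.Icc (-(1 / 4) * log (log n)) (log n ^ ((1 : ℝ) / 4))) :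
    (1 + exp (-x)) * (1 + (x - cSeq n) ^ 2) ≤ ε * log n := by
  set q := log n ^ ((1 : ℝ) / 4) with hq_def
  have hq4 : q ^ 4 = log n := by
    rw [hq_def, ← rpow_mul_natCast (by positivity)]
    norm_num
  calc (1 + exp (-x)) * (1 + (x - cSeq n) ^ 2)
      ≤ (2 * q) * (26 * q ^ 2) :=
        mul_le_mul (one_add_exp_neg_le hn hx.1) (one_add_sub_cSeq_sq_le hn hx) (by positivity)
          (by positivity)
    _ = 52 * q ^ 3 := by ring
    _ ≤ (ε * q) * q ^ 3 := by
      gcongr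
      exact (div_le_iff₀' hε).1 hq
    _ = ε * log n := by rw [← hq4]; ring

lemma sq_one_add_exp_neg_mul_div_log_le {n : ℕ} {x : ℝ} (hn : 1 ≤ log n)
    (hx : -(1 / 4) * log (log n) ≤ x) :
    ((1 + exp (-x)) * (1 + (x - cSeq n) ^ 2) / log n) ^ 2 ≤
      16 * max ((x - cSeq n) ^ 4 / log n ^ ((3 : ℝ) / 2)) (log n ^ ((3 : ℝ) / 2))⁻¹ := by
  set q := log n ^ ((1 : ℝ) / 4) with hq_def
  have hq : 0 < q := by positivity
  have hq4 : log n = q ^ 4 := by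
    rw [hq_def, ← rpow_mul_natCast (by positivity)]
    norm_num
  have hq6 : log n ^ ((3 : ℝ) / 2) = q ^ 6 := by
    rw [hq_def, ← rpow_mul_natCast (by positivity)]
    norm_num
  set t := x - cSeq n
  calc ((1 + exp (-x)) * (1 + t ^ 2) / log n) ^ 2
      ≤ ((2 * q) * (1 + t ^ 2) / log n) ^ 2 := by
        gcongr
        exact one_add_exp_neg_le hn hx
    _ = 4 * (1 + t ^ 2) ^ 2 / q ^ 6 := by
      rw [hq4]
      field_simp
      ring
    _ ≤ 8 * (t ^ 4 / q ^ 6) + 8 * (q ^ 6)⁻¹ := by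
      rw [← one_div, ← mul_div_assoc, ← mul_div_assoc, ← add_div]
      gcongr
      nlinarith only [sq_nonneg (t ^ 2 - 1)]
    _ ≤ 16 * max (t ^ 4 / q ^ 6) (q ^ 6)⁻¹ := by
      linarith [le_max_left (t ^ 4 / q ^ 6) (q ^ 6)⁻¹, le_max_right (t ^ 4 / q ^ 6) (q ^ 6)⁻¹]
    _ = _ := by rw [hq6]

lemma eventually_window_bounds {ε : ℝ} (hε : 0 < ε) : ∀ᶠ n : ℕ in atTop,
    ∀ x ∈ Set.Icc (-(1 / 4) * log (log n)) (log n ^ ((1 : ℝ) / 4)),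
      (1 + exp (-x)) * (1 + (x - cSeq n) ^ 2) ≤ ε * log n ∧
        ((1 + exp (-x)) * (1 + (x - cSeq n) ^ 2) / log n) ^ 2 ≤
          16 * max ((x - cSeq n) ^ 4 / log n ^ ((3 : ℝ) / 2)) (log n ^ ((3 : ℝ) / 2))⁻¹ := by
  have hlog : Tendsto (fun n : ℕ => log n) atTop atTop :=
    tendsto_log_atTop.comp tendsto_natCast_atTop_atTop
  filter_upwards [hlog.eventually_ge_atTop 1,
    ((tendsto_rpow_atTop (by norm_num : (0 : ℝ) < 1 / 4)).comp hlog).eventually_ge_atTop (52 / ε)]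
    with n hn hq x hx
  exact ⟨one_add_exp_neg_mul_le hε hn hq hx, sq_one_add_exp_neg_mul_div_log_le hn hx.1⟩

end Window

/-- Precise asymptotics of the density
`f_n(x) = n a_n⁻¹ φ(a_n + (x - c_n)/a_n) Φ(a_n + (x - c_n)/a_n)^{n-1}`
of `Y_n = a_n (X_{(n)} - b_n)` (with `b_n = a_n - c_n/a_n`), uniformly on
`x ∈ [-(1/4) log log n, (log n)^{1/4}]`, with relative error
`O(t_n(x)⁴/(log n)^{3/2})` (interpreted as at least `(log n)^{-3/2}`). -/
theorem density_asymptotic :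
    ∃ C > (0 : ℝ), ∃ N : ℕ, ∀ n ≥ N,
      ∀ x ∈ Set.Icc (-(1 / 4) * Real.log (Real.log n)) ((Real.log n) ^ ((1 : ℝ) / 4)),
        ∃ r : ℝ,
          (n : ℝ) * (aSeq n)⁻¹ * stdNormalPDF (aSeq n + (x - cSeq n) / aSeq n) *
              stdNormalCDF (aSeq n + (x - cSeq n) / aSeq n) ^ (n - 1) =
            Real.exp (-x - Real.exp (-x)) *
              (1 + Real.exp (-x) * ((x - cSeq n) ^ 2 + 2 * (x - cSeq n) + 2) / (4 * Real.log n)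
                - (x - cSeq n) ^ 2 / (4 * Real.log n)) * (1 + r) ∧
          |r| ≤ C * max ((x - cSeq n) ^ 4 / (Real.log n) ^ ((3 : ℝ) / 2))
                      ((Real.log n) ^ ((3 : ℝ) / 2))⁻¹ := by
  obtain ⟨C, hC, ε, hε, hgeneral⟩ := density_asymptotic_general
  obtain ⟨N, hN⟩ := eventually_atTop.1 (eventually_window_bounds hε)
  refine ⟨C * 16, by positivity, N, fun n hn x hx => ?_⟩
  obtain ⟨r, hdensity, hr⟩ := hgeneral n x (hN n hn x hx).1
  exact ⟨r, hdensity, (hr.trans (mul_le_mul_of_nonneg_left (hN n hn x hx).2 hC.le)).trans_eq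
    (mul_assoc _ _ _).symm⟩
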